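/- Fix k ∈ ℕ. For all x ∈ ℝ and y_1,...,y_k ∈ ℝ, lim_{n→∞} ( P_n[(n − ρ_∞(σ))/√n ≤ x and ρ̄_q(σ) ≤ y_q for all 1 ≤ q ≤ k] − P_n[(n − ρ_∞(σ))/√n ≤ x]·P_n[ρ̄_q(σ) ≤ y_q for all 1 ≤ q ≤ k] ) = 0; i.e., (n − ρ_∞)/√n is asymptotically weakly independent of the random vector (ρ̄_1,...,ρ̄_k). -/

import Mathlib

open scoped BigOperators Classical
open Finset Filter

/-- Probability of an event under the uniform measure on `S_n`. -/
noncomputable def Pn {n : ℕ} (p : Equiv.Perm (Fin n) → Prop) : ℝ :=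
  ((Finset.univ.filter p).card : ℝ) / (Fintype.card (Equiv.Perm (Fin n)) : ℝ)

/-- Expectation under the uniform measure on `S_n`. -/
noncomputable def En {n : ℕ} (g : Equiv.Perm (Fin n) → ℝ) : ℝ :=
  (∑ σ : Equiv.Perm (Fin n), g σ) / (Fintype.card (Equiv.Perm (Fin n)) : ℝ)

/-- Variance under the uniform measure on `S_n`. -/
noncomputable def VarN {n : ℕ} (g : Equiv.Perm (Fin n) → ℝ) : ℝ :=
  En (fun σ => (g σ - En g) ^ 2)

/-- Spearman's metric `ρ_q(σ) = Σ_i |σ(i) − i|^q`. -/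
noncomputable def rhoq (q : ℕ) {n : ℕ} (σ : Equiv.Perm (Fin n)) : ℝ :=
  ∑ i : Fin n, |((σ i : ℕ) : ℝ) - ((i : ℕ) : ℝ)| ^ q

/-- Normalized Spearman's metric `ρ̄_q = (ρ_q − E ρ_q)/√(Var ρ_q)`. -/
noncomputable def rhoqBar (q : ℕ) {n : ℕ} (σ : Equiv.Perm (Fin n)) : ℝ :=
  (rhoq q σ - En (rhoq q (n := n))) / Real.sqrt (VarN (rhoq q (n := n)))

/-- Spearman's uniform metric `ρ_∞(σ) = max_i |σ(i) − i|` (as a natural number). -/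
def rhoInf {n : ℕ} (σ : Equiv.Perm (Fin n)) : ℕ :=
  Finset.univ.sup fun i : Fin n => (((σ i : ℕ) : ℤ) - ((i : ℕ) : ℤ)).natAbs

/-!
The event `(n − ρ_∞)/√n ≤ x` fails exactly when `σ` avoids a board consisting of two corners of the
`n × n` square, which has `O(n)` cells in `O(√n)` rows and columns. Forcing `σ i = j` by a switching
is an `n`-to-one operation; it leaves the avoidance of the cells already treated unchanged up to
probability `O(n^{-1/2})`, and it changes `ρ_q` by at most `2 n^q`. Treating the `O(n)` cells one
after another therefore decouples the two events as soon as the probability that `ρ_q` lies within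
`2 n^q` of a given threshold tends to zero, so that the errors sum to `o(1)`.

This anticoncentration comes from composing `σ` with independent flips of the pairs `{i, rev i}`
for `i < 2M`. Most of these flips change `ρ_q` by order `n^q`, so by the Littlewood–Offord
inequality `ρ_q` meets a window of width `O(n^q)` with probability `O(M^{-1/2})` for every fixed
`M`. No central limit theorem is required.
-/
section LittlewoodOfford

variable {α R : Type*} [AddCommGroup R] [LinearOrder R] [IsOrderedAddMonoid R]

lemma sum_abs_symmDiff_filter_neg [Fintype α] (d : α → R) (S : Finset α) :
    ∑ p ∈ symmDiff S (univ.filter fun p => d p < 0), |d p| =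
      ∑ p ∈ S, d p + ∑ p with d p < 0, |d p| := by
  set N : Finset α := {p | d p < 0}
  have abs_eq_neg : ∀ p ∈ N, |d p| = -d p := fun p hp => abs_of_neg (mem_filter.1 hp).2
  have abs_eq_self : ∀ p ∈ S \ N, |d p| = d p := fun p hp =>
    abs_of_nonneg (not_lt.1 fun h => (mem_sdiff.1 hp).2 (mem_filter.2 ⟨mem_univ p, h⟩))
  calc ∑ p ∈ symmDiff S N, |d p|
      = ∑ p ∈ S \ N, |d p| + ∑ p ∈ N \ S, |d p| :=
        sum_union (disjoint_sdiff_sdiff (x := S) (y := N))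
    _ = ∑ p ∈ S \ N, d p - ∑ p ∈ N ∩ S, |d p| + ∑ p ∈ N, |d p| := by
        rw [sum_congr rfl abs_eq_self, ← sum_inter_add_sum_sdiff N S fun p => |d p|]
        abel
    _ = ∑ p ∈ S, d p + ∑ p ∈ N, |d p| := by
        rw [sum_congr rfl fun p hp => abs_eq_neg p (mem_inter.1 hp).1, sum_neg_distrib,
          inter_comm, sub_neg_eq_add, add_comm (∑ p ∈ S \ N, d p), sum_inter_add_sum_sdiff]

-- Taking the symmetric difference with `{d < 0}` replaces every `d p` by `|d p|`, up to a constant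
-- shift of the sums; for nonnegative weights the sets whose sums share a short window form an
-- antichain, and Sperner's theorem applies.
lemma card_sum_mem_Ico_le_choose [Fintype α] {d : α → R} {D : R} (hd : ∀ p, D ≤ |d p|) (t : R) :
    #{S : Finset α | ∑ p ∈ S, d p ∈ Set.Ico t (t + D)} ≤
      (Fintype.card α).choose (Fintype.card α / 2) := by
  rw [← card_image_of_injective _ (symmDiff_left_injective ({p | d p < 0} : Finset α))]
  refine IsAntichain.sperner ?_
  intro A hA B hB hne hsub
  obtain ⟨S, hS, rfl⟩ := mem_image.1 hA
  obtain ⟨T, hT, rfl⟩ := mem_image.1 hB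
  obtain ⟨p, hpT, hpS⟩ := exists_of_ssubset (hsub.ssubset_of_ne hne)
  have le_sum_sub_sum : D + ∑ p ∈ S, d p ≤ ∑ p ∈ T, d p := by
    have sum_insert_le := sum_le_sum_of_subset_of_nonneg (f := fun p => |d p|)
      (insert_subset hpT hsub) fun _ _ _ => abs_nonneg _
    rw [sum_insert hpS, sum_abs_symmDiff_filter_neg, sum_abs_symmDiff_filter_neg, ← add_assoc,
      add_le_add_iff_right] at sum_insert_le
    exact (add_le_add_left (hd p) _).trans sum_insert_le
  have lower := (mem_filter.1 hS).2.1
  have upper := (mem_filter.1 hT).2.2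
  exact (le_sum_sub_sum.trans_lt upper).not_ge (by rw [add_comm]; gcongr)

lemma card_powerset_sum_mem_Ico_le {s G : Finset α} (hG : G ⊆ s) {d : α → R} {D : R}
    (hd : ∀ p ∈ G, D ≤ |d p|) (t : R) :
    #{S ∈ s.powerset | ∑ p ∈ S, d p ∈ Set.Ico t (t + D)} ≤
      (#G).choose (#G / 2) * 2 ^ (#s - #G) := by
  rw [← card_sdiff_of_subset hG, ← card_powerset]
  refine card_le_mul_card_image_of_maps_to (f := (· \ G)) (fun S hS => ?_) _ fun S' _ => ?_
  · exact mem_powerset.2 (sdiff_subset_sdiff (mem_powerset.1 (mem_filter.1 hS).1) le_rfl)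
  have sperner := card_sum_mem_Ico_le_choose (α := G) (fun p => hd p p.2) (t - ∑ p ∈ S', d p)
  rw [Fintype.card_coe] at sperner
  refine le_trans (card_le_card_of_injOn (fun S => S.subtype (· ∈ G)) ?_ ?_) sperner
  · intro S hS
    obtain ⟨hSwindow, rfl⟩ := mem_filter.1 hS
    obtain ⟨lower, upper⟩ := (mem_filter.1 hSwindow).2
    have sum_subtype : ∑ p ∈ S.subtype (· ∈ G), d p = ∑ p ∈ S, d p - ∑ p ∈ S \ G, d p := by
      rw [sum_subtype_eq_sum_filter, filter_mem_eq_inter, eq_sub_iff_add_eq,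
        sum_inter_add_sum_sdiff]
    refine mem_coe.2 (mem_filter.2 ⟨mem_univ _, ?_⟩)
    rw [sum_subtype, sub_add_eq_add_sub]
    exact ⟨sub_le_sub_right lower _, sub_lt_sub_right upper _⟩
  · intro S hS T hT hST
    have sdiff_eq : S \ G = T \ G := (mem_filter.1 hS).2.trans (mem_filter.1 hT).2.symm
    have inter_eq : S ∩ G = T ∩ G := by
      simpa only [subtype_map, filter_mem_eq_inter]
        using congrArg (Finset.map (Function.Embedding.subtype (· ∈ G))) hST
    rw [← sdiff_union_inter S G, sdiff_eq, inter_eq, sdiff_union_inter]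

lemma card_powerset_sum_mem_Ico_nsmul_le {s G : Finset α} (hG : G ⊆ s) {d : α → R} {D : R}
    (hd : ∀ p ∈ G, D ≤ |d p|) (t : R) (J : ℕ) :
    #{S ∈ s.powerset | ∑ p ∈ S, d p ∈ Set.Ico t (t + J • D)} ≤
      J * ((#G).choose (#G / 2) * 2 ^ (#s - #G)) := by
  induction J with
  | zero => simp
  | succ J ih =>
    have last := card_powerset_sum_mem_Ico_le hG hd (t + J • D)
    rw [add_one_mul]
    refine (card_le_card fun S hS => ?_).trans ((card_union_le _ _).trans (add_le_add ih last))
    rw [mem_filter, succ_nsmul, ← add_assoc] at hS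
    rw [← filter_or, mem_filter]
    exact ⟨hS.1, Set.Ico_subset_Ico_union_Ico hS.2⟩

end LittlewoodOfford

section CentralBinom

lemma centralBinom_sq_mul_le (m : ℕ) : m.centralBinom ^ 2 * (2 * m + 1) ≤ 16 ^ m := by
  induction m with
  | zero => simp
  | succ m ih =>
    refine Nat.le_of_mul_le_mul_left (?_ : (m + 1) ^ 2 * _ ≤ (m + 1) ^ 2 * _) (by positivity)
    calc (m + 1) ^ 2 * ((m + 1).centralBinom ^ 2 * (2 * (m + 1) + 1))
        = ((m + 1) * (m + 1).centralBinom) ^ 2 * (2 * m + 3) := by ring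
      _ = (m.centralBinom ^ 2 * (2 * m + 1)) * (4 * ((2 * m + 1) * (2 * m + 3))) := by
          rw [Nat.succ_mul_centralBinom_succ]; ring
      _ ≤ 16 ^ m * (4 * (4 * (m + 1) ^ 2)) := Nat.mul_le_mul ih (by nlinarith)
      _ = (m + 1) ^ 2 * 16 ^ (m + 1) := by ring

lemma tendsto_centralBinom_div_four_pow :
    Tendsto (fun m : ℕ => (m.centralBinom : ℝ) / 4 ^ m) atTop (nhds 0) := by
  have le_sqrt (m : ℕ) : (m.centralBinom : ℝ) / 4 ^ m ≤ √(1 / (m + 1 : ℝ)) := by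
    refine Real.le_sqrt_of_sq_le ?_
    rw [div_pow, div_le_div_iff₀ (by positivity) (by positivity), one_mul]
    calc (m.centralBinom : ℝ) ^ 2 * (m + 1)
        ≤ (m.centralBinom : ℝ) ^ 2 * (2 * m + 1) := by gcongr; linarith [m.cast_nonneg (α := ℝ)]
      _ ≤ 16 ^ m := mod_cast centralBinom_sq_mul_le m
      _ = (4 ^ m) ^ 2 := by rw [pow_right_comm]; norm_num
  refine squeeze_zero (fun m => by positivity) le_sqrt ?_
  simpa using (tendsto_one_div_add_atTop_nhds_zero_nat (𝕜 := ℝ)).sqrt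

end CentralBinom

section UniformPermutation

variable {n : ℕ} {ι : Type*}

lemma Pn_eq_expect (p : Equiv.Perm (Fin n) → Prop) :
    Pn p = 𝔼 σ, if p σ then (1 : ℝ) else 0 := by
  rw [Fintype.expect_eq_sum_div_card, sum_boole, Pn]

lemma sum_Pn_eq_expect_card (s : Finset ι) (p : ι → Equiv.Perm (Fin n) → Prop) :
    ∑ i ∈ s, Pn (p i) = 𝔼 σ, (#{i ∈ s | p i σ} : ℝ) := by
  simp only [Pn_eq_expect, ← expect_sum_comm, sum_boole]

lemma Pn_nonneg (p : Equiv.Perm (Fin n) → Prop) : 0 ≤ Pn p := by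
  unfold Pn; positivity

lemma Pn_le_one (p : Equiv.Perm (Fin n) → Prop) : Pn p ≤ 1 :=
  div_le_one_of_le₀ (mod_cast card_le_univ _) (Nat.cast_nonneg _)

lemma Pn_true : Pn (fun _ : Equiv.Perm (Fin n) => True) = 1 := by
  simp [Pn_eq_expect]

lemma Pn_false : Pn (fun _ : Equiv.Perm (Fin n) => False) = 0 := by
  simp [Pn_eq_expect]

lemma Pn_mono {p r : Equiv.Perm (Fin n) → Prop} (h : ∀ σ, p σ → r σ) : Pn p ≤ Pn r := by
  unfold Pn
  gcongr with σ
  exact h σ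

lemma Pn_and_add_Pn_and_not (p r : Equiv.Perm (Fin n) → Prop) :
    Pn (fun σ => p σ ∧ r σ) + Pn (fun σ => p σ ∧ ¬ r σ) = Pn p := by
  simp only [Pn_eq_expect, ← expect_add_distrib]
  refine expect_congr rfl fun σ _ => ?_
  by_cases hp : p σ <;> by_cases hr : r σ <;> simp [hp, hr]

lemma Pn_or_le (p r : Equiv.Perm (Fin n) → Prop) : Pn (fun σ => p σ ∨ r σ) ≤ Pn p + Pn r := by
  simp only [Pn_eq_expect, ← expect_add_distrib]
  refine expect_le_expect fun σ _ => ?_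
  by_cases hp : p σ <;> by_cases hr : r σ <;> simp [hp, hr]

lemma Pn_exists_mem_le (s : Finset ι) (p : ι → Equiv.Perm (Fin n) → Prop) :
    Pn (fun σ => ∃ i ∈ s, p i σ) ≤ ∑ i ∈ s, Pn (p i) := by
  rw [sum_Pn_eq_expect_card, Pn_eq_expect]
  refine expect_le_expect fun σ _ => ?_
  split_ifs with h
  · exact_mod_cast card_pos.2 (filter_nonempty_iff.2 h)
  · positivity

lemma mul_Pn_le_card_filter_le_sum (s : Finset ι) (p : ι → Equiv.Perm (Fin n) → Prop) (m : ℕ) :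
    m * Pn (fun σ => m ≤ #{i ∈ s | p i σ}) ≤ ∑ i ∈ s, Pn (p i) := by
  rw [sum_Pn_eq_expect_card, Pn_eq_expect, mul_expect]
  refine expect_le_expect fun σ _ => ?_
  split_ifs with h
  · simpa using h
  · simp

lemma Pn_comp_equiv (e : Equiv.Perm (Fin n) ≃ Equiv.Perm (Fin n))
    (p : Equiv.Perm (Fin n) → Prop) : Pn (fun σ => p (e σ)) = Pn p := by
  simp only [Pn_eq_expect]
  exact Fintype.expect_equiv e _ _ fun _ => rfl

lemma abs_Pn_sub_Pn_le {p r b : Equiv.Perm (Fin n) → Prop} (h : ∀ σ, ¬ b σ → (p σ ↔ r σ)) :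
    |Pn p - Pn r| ≤ Pn b := by
  have p_le : Pn p ≤ Pn r + Pn b :=
    (Pn_mono fun σ hp => or_iff_not_imp_right.2 fun hb => (h σ hb).1 hp).trans (Pn_or_le r b)
  have r_le : Pn r ≤ Pn p + Pn b :=
    (Pn_mono fun σ hr => or_iff_not_imp_right.2 fun hb => (h σ hb).2 hr).trans (Pn_or_le p b)
  exact abs_sub_le_iff.2 ⟨by linarith, by linarith⟩

lemma Pn_not_and_sub_mul (p r : Equiv.Perm (Fin n) → Prop) :
    Pn (fun σ => ¬ p σ ∧ r σ) - Pn (fun σ => ¬ p σ) * Pn r =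
      -(Pn (fun σ => p σ ∧ r σ) - Pn p * Pn r) := by
  have total := Pn_and_add_Pn_and_not (fun _ => True) p
  have split := Pn_and_add_Pn_and_not r p
  simp only [true_and, Pn_true] at total
  simp only [and_comm (a := r _)] at split
  linear_combination split - Pn r * total

lemma card_mul_Pn_le_of_card_translates_le (s : Finset ι) (g : ι → Equiv.Perm (Fin n))
    (p b : Equiv.Perm (Fin n) → Prop) (k : ℕ) (h : ∀ σ, ¬ b σ → #{i ∈ s | p (σ * g i)} ≤ k) :
    #s * Pn p ≤ #s * Pn b + k := by
  have translate (i : ι) : Pn (fun σ => p (σ * g i)) = Pn p :=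
    Pn_comp_equiv (Equiv.mulRight (g i)) p
  calc #s * Pn p = ∑ i ∈ s, Pn (fun σ => p (σ * g i)) := by
        simp only [translate, sum_const, nsmul_eq_mul]
    _ ≤ 𝔼 σ, (#s * (if b σ then (1 : ℝ) else 0) + k) := by
        rw [sum_Pn_eq_expect_card]
        refine expect_le_expect fun σ _ => ?_
        split_ifs with hb
        · rw [mul_one]
          exact_mod_cast (card_filter_le s _).trans (Nat.le_add_right _ k)
        · rw [mul_zero, zero_add]
          exact_mod_cast h σ hb
    _ = #s * Pn b + k := by
        rw [expect_add_distrib, Fintype.expect_const, ← mul_expect, Pn_eq_expect]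

lemma mul_Pn_apply_mem (i : Fin n) (R : Finset (Fin n)) :
    n * Pn (fun σ : Equiv.Perm (Fin n) => σ i ∈ R) = #R := by
  have exchangeable (j : Fin n) : Pn (fun σ : Equiv.Perm (Fin n) => σ j ∈ R) =
      Pn (fun σ : Equiv.Perm (Fin n) => σ i ∈ R) := by
    simpa using Pn_comp_equiv (Equiv.mulRight (Equiv.swap i j)) fun σ => σ i ∈ R
  have card_preimage (σ : Equiv.Perm (Fin n)) : #{j | σ j ∈ R} = #R :=
    card_equiv σ (by simp)
  calc n * Pn (fun σ : Equiv.Perm (Fin n) => σ i ∈ R)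
      = ∑ j, Pn (fun σ : Equiv.Perm (Fin n) => σ j ∈ R) := by
        simp only [exchangeable, sum_const, card_fin, nsmul_eq_mul]
    _ = 𝔼 _σ : Equiv.Perm (Fin n), (#R : ℝ) := by
        rw [sum_Pn_eq_expect_card]
        exact expect_congr rfl fun σ _ => by rw [← card_preimage σ]; congr!
    _ = #R := Fintype.expect_const _

lemma Pn_apply_mem (i : Fin n) (R : Finset (Fin n)) :
    Pn (fun σ : Equiv.Perm (Fin n) => σ i ∈ R) = #R / n := by
  have := i.pos
  rw [← mul_Pn_apply_mem i R]
  field_simp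

lemma Pn_inv_apply_mem (i : Fin n) (R : Finset (Fin n)) :
    Pn (fun σ : Equiv.Perm (Fin n) => σ⁻¹ i ∈ R) = #R / n :=
  (Pn_comp_equiv (Equiv.inv _) fun σ => σ i ∈ R).trans (Pn_apply_mem i R)

lemma sub_one_mul_Pn_rel_le {a b : Fin n} (hab : a ≠ b) (r : Fin n → Fin n → Prop) {k : ℕ}
    (hr : ∀ u, #{v | r u v} ≤ k) :
    (n - 1 : ℝ) * Pn (fun σ : Equiv.Perm (Fin n) => r (σ a) (σ b)) ≤ k := by
  have exchangeable : ∀ c ∈ univ.erase a, Pn (fun σ : Equiv.Perm (Fin n) => r (σ a) (σ c)) =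
      Pn (fun σ : Equiv.Perm (Fin n) => r (σ a) (σ b)) := fun c hc => by
    simpa [Equiv.swap_apply_of_ne_of_ne hab (ne_of_mem_erase hc).symm]
      using Pn_comp_equiv (Equiv.mulRight (Equiv.swap b c)) fun σ => r (σ a) (σ b)
  have card_le (σ : Equiv.Perm (Fin n)) : #{c ∈ univ.erase a | r (σ a) (σ c)} ≤ k :=
    calc #{c ∈ univ.erase a | r (σ a) (σ c)}
      _ ≤ #{c | r (σ a) (σ c)} := card_le_card (filter_subset_filter _ (erase_subset a univ))
      _ = #{v | r (σ a) v} := card_equiv σ (by simp)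
      _ ≤ k := hr (σ a)
  calc (n - 1 : ℝ) * Pn (fun σ : Equiv.Perm (Fin n) => r (σ a) (σ b))
      = ∑ c ∈ univ.erase a, Pn (fun σ : Equiv.Perm (Fin n) => r (σ a) (σ c)) := by
        rw [sum_congr rfl exchangeable, sum_const, nsmul_eq_mul, card_erase_of_mem (mem_univ a),
          card_fin, Nat.cast_pred a.pos]
    _ ≤ k := by
        rw [sum_Pn_eq_expect_card]
        exact expect_le univ_nonempty fun σ _ => mod_cast card_le σ

end UniformPermutation

section Switching

variable {α : Type*} [DecidableEq α]

/-- The switching of `σ` at the cell `(i, j)`: the permutation which agrees with `σ` except that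
it sends `i` to `j` and, to compensate, `σ⁻¹ j` to `σ i`. -/
def switch (i j : α) (σ : Equiv.Perm α) : Equiv.Perm α :=
  Equiv.swap (σ i) j * σ

lemma switch_apply_self (i j : α) (σ : Equiv.Perm α) : switch i j σ i = j := by
  simp [switch]

lemma switch_apply_of_ne {i j x : α} {σ : Equiv.Perm α} (hi : x ≠ i) (hj : x ≠ σ⁻¹ j) :
    switch i j σ x = σ x :=
  Equiv.swap_apply_of_ne_of_ne (σ.injective.ne hi) fun h => hj (Equiv.Perm.eq_inv_iff_eq.2 h)

lemma abs_sum_switch_sub_sum_le [Fintype α] {c : α → α → ℝ} {C : ℝ} (hc : ∀ x y, 0 ≤ c x y)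
    (hC : ∀ x y, c x y ≤ C) (i j : α) (σ : Equiv.Perm α) :
    |∑ x, c x (switch i j σ x) - ∑ x, c x (σ x)| ≤ 2 * C := by
  have abs_le_bound (x y z : α) : |c x y - c x z| ≤ C :=
    abs_sub_le_of_nonneg_of_le (hc x y) (hC x y) (hc x z) (hC x z)
  have C_nonneg : 0 ≤ C := (hc i i).trans (hC i i)
  calc |∑ x, c x (switch i j σ x) - ∑ x, c x (σ x)|
      = |∑ x ∈ {i, σ⁻¹ j}, (c x (switch i j σ x) - c x (σ x))| := by
        rw [← sum_sub_distrib, ← sum_subset (subset_univ {i, σ⁻¹ j})]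
        intro x _ hx
        simp only [mem_insert, mem_singleton, not_or] at hx
        rw [switch_apply_of_ne hx.1 hx.2, sub_self]
    _ ≤ #{i, σ⁻¹ j} * C := by
        rw [← nsmul_eq_mul]
        exact (abs_sum_le_sum_abs _ _).trans (sum_le_card_nsmul _ _ _ fun x _ => abs_le_bound ..)
    _ ≤ 2 * C := by
        gcongr
        exact_mod_cast card_le_two

/-- The event that some switching of `σ` changes the truth value of `B`: the set of permutations at
which `B` is not locally constant for the switching graph. -/
def SwitchSensitive (B : Equiv.Perm α → Prop) (σ : Equiv.Perm α) : Prop :=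
  ∃ i j, ¬ (B σ ↔ B (switch i j σ))

/-- The permutation `σ` has no rook on the board `Q`: its graph is disjoint from `Q`. -/
def AvoidsBoard (Q : Finset (α × α)) (σ : Equiv.Perm α) : Prop :=
  ∀ c ∈ Q, σ c.1 ≠ c.2

lemma avoidsBoard_insert (i j : α) (Q : Finset (α × α)) (σ : Equiv.Perm α) :
    AvoidsBoard (insert (i, j) Q) σ ↔ σ i ≠ j ∧ AvoidsBoard Q σ :=
  forall_mem_insert ..

lemma avoidsBoard_switch_iff {R : Finset α} {Q : Finset (α × α)} (hQ : Q ⊆ R ×ˢ R) {i j : α}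
    (hij : (i, j) ∉ Q) {σ : Equiv.Perm α} (hi : σ i ∉ R) (hj : σ⁻¹ j ∉ R) :
    AvoidsBoard Q (switch i j σ) ↔ AvoidsBoard Q σ := by
  refine forall₂_congr fun ⟨x, y⟩ hxy => ?_
  obtain ⟨hxR, hyR⟩ := mem_product.1 (hQ hxy)
  obtain rfl | hx := eq_or_ne x i
  · rw [switch_apply_self]
    exact iff_of_true (fun h => hij (h ▸ hxy)) fun h => hi (h ▸ hyR)
  · rw [switch_apply_of_ne hx fun h => hj (h ▸ hxR)]

variable {n : ℕ}

lemma Pn_comp_switch (i j : Fin n) (F : Equiv.Perm (Fin n) → Prop) :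
    Pn (fun σ => F (switch i j σ)) = n * Pn (fun σ => σ i = j ∧ F σ) := by
  have fiber (v : Fin n) : Pn (fun σ => σ i = v ∧ F (Equiv.swap v j * σ)) =
      Pn (fun σ => σ i = j ∧ F σ) := by
    rw [← Pn_comp_equiv (Equiv.mulLeft (Equiv.swap v j)) fun σ => σ i = j ∧ F σ]
    simp only [Equiv.coe_mulLeft, Equiv.Perm.mul_apply, Equiv.swap_apply_eq_iff,
      Equiv.swap_apply_right]
  have sum_fiber : ∑ v, Pn (fun σ => σ i = v ∧ F (Equiv.swap v j * σ)) =
      Pn (fun σ => F (switch i j σ)) := by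
    simp only [Pn_eq_expect]
    rw [← expect_sum_comm]
    refine expect_congr rfl fun σ _ => ?_
    rw [sum_eq_single (σ i)]
    · simp only [true_and]; rfl
    · exact fun v _ hv => if_neg fun h => hv h.1.symm
    · exact fun h => absurd (mem_univ _) h
  rw [← sum_fiber, sum_congr rfl fun v _ => fiber v, sum_const, card_fin, nsmul_eq_mul]

lemma abs_Pn_sub_mul_Pn_apply_eq_and_le {R : Finset (Fin n)} {Q : Finset (Fin n × Fin n)}
    (hQ : Q ⊆ R ×ˢ R) {i j : Fin n} (hij : (i, j) ∉ Q) (B : Equiv.Perm (Fin n) → Prop) :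
    |Pn (fun σ => AvoidsBoard Q σ ∧ B σ) - n * Pn (fun σ => σ i = j ∧ AvoidsBoard Q σ ∧ B σ)| ≤
      2 * #R / n + Pn (SwitchSensitive B) := by
  rw [← Pn_comp_switch i j]
  calc _ ≤ Pn (fun σ => σ i ∈ R ∨ σ⁻¹ j ∈ R ∨ SwitchSensitive B σ) := by
        refine abs_Pn_sub_Pn_le fun σ hσ => ?_
        simp only [SwitchSensitive, not_or, not_exists, not_not] at hσ
        rw [avoidsBoard_switch_iff hQ hij hσ.1 hσ.2.1, ← hσ.2.2 i j]
    _ ≤ #R / n + (#R / n + Pn (SwitchSensitive B)) := by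
        refine (Pn_or_le _ _).trans (add_le_add (Pn_apply_mem i R).le ?_)
        exact (Pn_or_le _ _).trans (add_le_add_left (Pn_inv_apply_mem j R).le _)
    _ = 2 * #R / n + Pn (SwitchSensitive B) := by ring

lemma abs_Pn_avoidsBoard_and_sub_pow_mul_le {R : Finset (Fin n)} {Q : Finset (Fin n × Fin n)}
    (hQ : Q ⊆ R ×ˢ R) (B : Equiv.Perm (Fin n) → Prop) :
    |Pn (fun σ => AvoidsBoard Q σ ∧ B σ) - (1 - 1 / (n : ℝ)) ^ #Q * Pn B| ≤
      #Q * ((2 * #R / n + Pn (SwitchSensitive B)) / n) := by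
  induction Q using Finset.induction_on with
  | empty => simp [AvoidsBoard]
  | insert c Q hc ih =>
    obtain ⟨i, j⟩ := c
    have one_le_n : (1 : ℝ) ≤ n := mod_cast i.pos
    have hQ' : Q ⊆ R ×ˢ R := (subset_insert _ _).trans hQ
    have step := abs_Pn_sub_mul_Pn_apply_eq_and_le hQ' hc B
    have split := Pn_and_add_Pn_and_not (fun σ => AvoidsBoard Q σ ∧ B σ) (fun σ => σ i = j)
    simp only [and_comm (b := _ = j), and_comm (b := ¬ _)] at split
    simp only [avoidsBoard_insert, and_assoc, ne_eq, card_insert_of_notMem hc]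
    set X := Pn (fun σ => AvoidsBoard Q σ ∧ B σ)
    set Y := Pn (fun σ => σ i = j ∧ AvoidsBoard Q σ ∧ B σ)
    set Z := Pn (fun σ => ¬ σ i = j ∧ AvoidsBoard Q σ ∧ B σ)
    set e := 2 * (#R : ℝ) / n + Pn (SwitchSensitive B)
    set a := 1 - 1 / (n : ℝ) with ha
    have a_nonneg : 0 ≤ a := sub_nonneg.2 ((div_le_one (by linarith)).2 one_le_n)
    have a_le_one : a ≤ 1 := sub_le_self _ (by positivity)
    have decomposition :
        Z - a ^ (#Q + 1) * Pn B = (X - n * Y) / n + a * (X - a ^ #Q * Pn B) := by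
      have X_div : X / n = X - a * X := by rw [ha]; ring
      have sub_div : (X - n * Y) / n = X / n - Y := by field_simp
      rw [sub_div, X_div, pow_succ]
      linear_combination split
    calc |Z - a ^ (#Q + 1) * Pn B|
        ≤ |X - n * Y| / n + a * |X - a ^ #Q * Pn B| := by
          rw [decomposition]
          refine (abs_add_le _ _).trans_eq ?_
          rw [abs_div, abs_mul, abs_of_nonneg a_nonneg, Nat.abs_cast]
      _ ≤ e / n + 1 * (#Q * (e / n)) := by
          gcongr
          exact ih hQ'
      _ = ((#Q + 1 : ℕ) : ℝ) * (e / n) := by push_cast; ring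

lemma abs_Pn_avoidsBoard_and_sub_mul_le {R : Finset (Fin n)} {Q : Finset (Fin n × Fin n)}
    (hQ : Q ⊆ R ×ˢ R) (B : Equiv.Perm (Fin n) → Prop) :
    |Pn (fun σ => AvoidsBoard Q σ ∧ B σ) - Pn (AvoidsBoard Q) * Pn B| ≤
      2 * ((#R : ℝ) ^ 2 / n * (2 * #R / n + Pn (SwitchSensitive B))) := by
  have joint := abs_Pn_avoidsBoard_and_sub_pow_mul_le hQ B
  have marginal := abs_Pn_avoidsBoard_and_sub_pow_mul_le hQ fun _ => True
  have sensitive_true : Pn (SwitchSensitive fun _ : Equiv.Perm (Fin n) => True) = 0 := by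
    have : SwitchSensitive (fun _ : Equiv.Perm (Fin n) => True) = fun _ => False := by
      ext; simp [SwitchSensitive]
    rw [this, Pn_false]
  simp only [and_true, Pn_true, mul_one, sensitive_true, add_zero] at marginal
  have card_Q_le : (#Q : ℝ) ≤ (#R : ℝ) ^ 2 := by
    rw [sq]; exact_mod_cast (card_le_card hQ).trans_eq (card_product R R)
  have sensitive_nonneg := Pn_nonneg (SwitchSensitive B)
  set e := 2 * (#R : ℝ) / n + Pn (SwitchSensitive B)
  set a := (1 - 1 / (n : ℝ)) ^ #Q
  have e_nonneg : 0 ≤ e := by positivity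
  have error_le : (#Q : ℝ) * (e / n) ≤ #R ^ 2 / n * e := by
    rw [div_mul_eq_mul_div, ← mul_div_assoc]
    gcongr
  have marginal_error_le : (#Q : ℝ) * (2 * #R / n / n) ≤ #Q * (e / n) := by
    gcongr
    exact le_add_of_nonneg_right sensitive_nonneg
  calc |Pn (fun σ => AvoidsBoard Q σ ∧ B σ) - Pn (AvoidsBoard Q) * Pn B|
      = |(Pn (fun σ => AvoidsBoard Q σ ∧ B σ) - a * Pn B) -
          Pn B * (Pn (AvoidsBoard Q) - a)| := by ring_nf
    _ ≤ |Pn (fun σ => AvoidsBoard Q σ ∧ B σ) - a * Pn B| + 1 * |Pn (AvoidsBoard Q) - a| := by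
        refine (abs_sub _ _).trans (add_le_add_right ?_ _)
        rw [abs_mul, abs_of_nonneg (Pn_nonneg B)]
        gcongr
        exact Pn_le_one B
    _ ≤ 2 * (#R ^ 2 / n * e) := by linarith

end Switching

section Flips

variable {n : ℕ}

/-- The permutation of the positions `Fin n` that exchanges `i` and `Fin.rev i` for every `i ∈ S`
and fixes all the other positions. -/
def pairFlip (S : Finset (Fin n)) : Equiv.Perm (Fin n) :=
  Function.Involutive.toPerm (fun i => if i ∈ S ∨ i.rev ∈ S then i.rev else i) fun i => by
    by_cases h : i ∈ S ∨ i.rev ∈ S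
    · simp [h, h.symm]
    · simp [h]

/-- The increment of the total cost `∑ i, c i (f i)` when the values of the assignment `f` at `p`
and `Fin.rev p` are exchanged. -/
def flipGain {β M : Type*} [AddCommGroup M] (c : Fin n → β → M) (f : Fin n → β) (p : Fin n) : M :=
  c p (f p.rev) - c p (f p) + (c p.rev (f p) - c p.rev (f p.rev))

lemma pairFlip_apply (S : Finset (Fin n)) (i : Fin n) :
    pairFlip S i = if i ∈ S ∨ i.rev ∈ S then i.rev else i :=
  rfl

lemma sum_comp_pairFlip {β M : Type*} [AddCommGroup M] (c : Fin n → β → M) (f : Fin n → β)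
    {S : Finset (Fin n)} (hS : ∀ i ∈ S, i.rev ∉ S) :
    ∑ i, c i (f (pairFlip S i)) = ∑ i, c i (f i) + ∑ p ∈ S, flipGain c f p := by
  let d (i : Fin n) : M := c i (f i.rev) - c i (f i)
  have summand_eq (i : Fin n) : c i (f (pairFlip S i)) =
      c i (f i) + ((if i ∈ S then d i else 0) + if i.rev ∈ S then d i else 0) := by
    by_cases hi : i ∈ S
    · simp [pairFlip_apply, hi, hS i hi, d]
    · by_cases hi' : i.rev ∈ S <;> simp [pairFlip_apply, hi, hi', d]
  have reindex : ∑ i, (if i.rev ∈ S then d i else 0) = ∑ p ∈ S, d p.rev := by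
    rw [← Equiv.sum_comp Fin.revPerm]
    simp
  have gain (p : Fin n) : flipGain c f p = d p + d p.rev := by
    simp only [flipGain, d, Fin.rev_rev]
  simp only [summand_eq, gain, sum_add_distrib, reindex, sum_ite_mem, univ_inter]

end Flips

section SpearmanCost

lemma pow_abs_sub_le_abs_crossing {R : Type*} [CommRing R] [LinearOrder R] [IsStrictOrderedRing R]
    {q : ℕ} (hq : q ≠ 0) {a b u v : R} (hu : u ∈ Set.Icc a b) (hv : v ∈ Set.Icc a b) :
    |v - u| ^ q ≤ |(|v - a| ^ q - |u - a| ^ q) + (|u - b| ^ q - |v - b| ^ q)| := by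
  wlog huv : u ≤ v generalizing u v
  · rw [abs_sub_comm v u, ← abs_neg (_ + _)]
    convert this hv hu (le_of_not_ge huv) using 2
    ring
  obtain ⟨hau, hub⟩ := hu
  obtain ⟨hav, hvb⟩ := hv
  have superadditive : (v - u) ^ q + (u - a) ^ q ≤ (v - a) ^ q := by
    simpa using pow_add_pow_le (sub_nonneg.2 huv) (sub_nonneg.2 hau) hq
  have monotone : (b - v) ^ q ≤ (b - u) ^ q :=
    pow_le_pow_left₀ (sub_nonneg.2 hvb) (sub_le_sub_left huv b) q
  rw [abs_sub_comm u b, abs_sub_comm v b, abs_of_nonneg (sub_nonneg.2 huv),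
    abs_of_nonneg (sub_nonneg.2 hau), abs_of_nonneg (sub_nonneg.2 hav),
    abs_of_nonneg (sub_nonneg.2 hub), abs_of_nonneg (sub_nonneg.2 hvb)]
  exact (by linarith : _ ≤ _).trans (le_abs_self _)

variable {n : ℕ}

/-- The contribution `|j − i|^q` to `ρ_q` of a permutation sending `i` to `j`. -/
noncomputable def spearmanCost (q : ℕ) (i j : Fin n) : ℝ :=
  |((j : ℕ) : ℝ) - ((i : ℕ) : ℝ)| ^ q

lemma spearmanCost_nonneg (q : ℕ) (i j : Fin n) : 0 ≤ spearmanCost q i j := by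
  unfold spearmanCost; positivity

lemma spearmanCost_le (q : ℕ) (i j : Fin n) : spearmanCost q i j ≤ (n : ℝ) ^ q :=
  pow_le_pow_left₀ (abs_nonneg _) (abs_sub_le_of_nonneg_of_le (Nat.cast_nonneg _)
    (mod_cast j.is_lt.le) (Nat.cast_nonneg _) (mod_cast i.is_lt.le)) q

lemma abs_rhoq_switch_sub_rhoq_le (q : ℕ) (i j : Fin n) (σ : Equiv.Perm (Fin n)) :
    |rhoq q (switch i j σ) - rhoq q σ| ≤ 2 * (n : ℝ) ^ q :=
  abs_sum_switch_sub_sum_le (spearmanCost_nonneg q) (spearmanCost_le q) i j σ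

lemma pow_le_abs_flipGain_spearmanCost {q : ℕ} (hq : q ≠ 0) {f : Fin n → Fin n} {p : Fin n}
    (hp : f p ∈ Set.Icc p p.rev) (hp' : f p.rev ∈ Set.Icc p p.rev) {w : ℝ} (hw : 0 ≤ w)
    (hf : w ≤ |((f p.rev : ℕ) : ℝ) - ((f p : ℕ) : ℝ)|) :
    w ^ q ≤ |flipGain (spearmanCost q) f p| := by
  have cast_mem {v : Fin n} (hv : v ∈ Set.Icc p p.rev) :
      ((v : ℕ) : ℝ) ∈ Set.Icc ((p : ℕ) : ℝ) ((p.rev : ℕ) : ℝ) :=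
    ⟨mod_cast hv.1, mod_cast hv.2⟩
  exact (pow_le_pow_left₀ hw hf q).trans
    (pow_abs_sub_le_abs_crossing hq (cast_mem hp) (cast_mem hp'))

end SpearmanCost

section Margin

/-- The `m` smallest elements of `Fin n`. -/
def lowerMargin (n m : ℕ) : Finset (Fin n) := {i | (i : ℕ) < m}

/-- The `m` smallest and the `m` largest elements of `Fin n`. -/
def margin (n m : ℕ) : Finset (Fin n) := {i | (i : ℕ) < m ∨ (i.rev : ℕ) < m}

variable {n m : ℕ}

lemma mem_lowerMargin {i : Fin n} : i ∈ lowerMargin n m ↔ (i : ℕ) < m := by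
  simp [lowerMargin]

lemma mem_margin {i : Fin n} : i ∈ margin n m ↔ (i : ℕ) < m ∨ (i.rev : ℕ) < m := by
  simp [margin]

lemma card_lowerMargin (h : m ≤ n) : #(lowerMargin n m) = m := by
  rw [lowerMargin, Fin.card_filter_val_lt, min_eq_right h]

lemma card_margin_le (n m : ℕ) : #(margin n m) ≤ 2 * m := by
  have card_low : #{i : Fin n | (i : ℕ) < m} ≤ m := by
    rw [Fin.card_filter_val_lt]; exact min_le_right n m
  have card_high : #{i : Fin n | (i.rev : ℕ) < m} = #{i : Fin n | (i : ℕ) < m} :=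
    card_equiv Fin.revPerm (by simp)
  rw [margin, filter_or, two_mul]
  exact (card_union_le _ _).trans (add_le_add card_low (card_high.trans_le card_low))

lemma rev_notMem_of_subset_lowerMargin (h : 2 * m ≤ n) {S : Finset (Fin n)}
    (hS : S ⊆ lowerMargin n m) {i : Fin n} (hi : i ∈ S) : i.rev ∉ S := fun hi' => by
  have lt := mem_lowerMargin.1 (hS hi)
  have rev_lt := mem_lowerMargin.1 (hS hi')
  rw [Fin.val_rev] at rev_lt
  omega

lemma mem_Icc_rev_of_notMem_margin {p v : Fin n} (hp : p ∈ lowerMargin n m)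
    (hv : v ∉ margin n m) : v ∈ Set.Icc p p.rev := by
  rw [mem_lowerMargin] at hp
  rw [mem_margin, Fin.val_rev] at hv
  rw [Set.mem_Icc, Fin.le_def, Fin.le_def, Fin.val_rev]
  omega

end Margin

section Anticoncentration

variable {n : ℕ}

lemma card_abs_sub_lt_le (u : Fin n) (w : ℕ) :
    #{v : Fin n | |((v : ℕ) : ℝ) - ((u : ℕ) : ℝ)| < w} ≤ 2 * w := by
  calc #{v : Fin n | |((v : ℕ) : ℝ) - ((u : ℕ) : ℝ)| < w}
      ≤ #(Ioo ((u : ℤ) - w) (u + w)) := by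
        refine card_le_card_of_injOn (fun v => (v : ℤ)) (fun v hv => ?_) fun v _ v' _ h => ?_
        · have near : |((v : ℕ) : ℝ) - ((u : ℕ) : ℝ)| < w := by simpa using hv
          rw [abs_sub_lt_iff] at near
          have below : (v : ℕ) < u + w := by exact_mod_cast (by linarith : (v : ℝ) < u + w)
          have above : (u : ℕ) < v + w := by exact_mod_cast (by linarith : (u : ℝ) < v + w)
          simp only [coe_Ioo, Set.mem_Ioo]
          omega
        · exact Fin.ext (by simpa using h)
    _ ≤ 2 * w := by rw [Int.card_Ioo]; omega

lemma Pn_abs_flipGain_lt_le {q : ℕ} (hq : q ≠ 0) {m : ℕ} (hm : 2 * m ≤ n) {p : Fin n}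
    (hp : p ∈ lowerMargin n m) (w : ℕ) :
    Pn (fun σ : Equiv.Perm (Fin n) => |flipGain (spearmanCost q) σ p| < (w : ℝ) ^ q) ≤
      (4 * m + 4 * w) / n := by
  have p_lt : (p : ℕ) < m := mem_lowerMargin.1 hp
  have two_le_n : (2 : ℝ) ≤ n := by exact_mod_cast (by omega : 2 ≤ n)
  have p_ne_rev : p ≠ p.rev := fun h => by
    have := congrArg Fin.val h
    rw [Fin.val_rev] at this
    omega
  let near (u v : Fin n) : Prop := |((v : ℕ) : ℝ) - ((u : ℕ) : ℝ)| < w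
  have Pn_margin_le (i : Fin n) :
      Pn (fun σ : Equiv.Perm (Fin n) => σ i ∈ margin n m) ≤ 2 * m / n := by
    rw [Pn_apply_mem]
    gcongr
    exact_mod_cast card_margin_le n m
  have Pn_near_le : Pn (fun σ : Equiv.Perm (Fin n) => near (σ p) (σ p.rev)) ≤ 4 * w / n := by
    have bound := sub_one_mul_Pn_rel_le p_ne_rev near fun u => by convert card_abs_sub_lt_le u w
    push_cast at bound
    rw [le_div_iff₀ (by linarith)]
    nlinarith [Pn_nonneg fun σ : Equiv.Perm (Fin n) => near (σ p) (σ p.rev)]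
  calc Pn (fun σ : Equiv.Perm (Fin n) => |flipGain (spearmanCost q) σ p| < (w : ℝ) ^ q)
      ≤ Pn (fun σ : Equiv.Perm (Fin n) =>
          σ p ∈ margin n m ∨ σ p.rev ∈ margin n m ∨ near (σ p) (σ p.rev)) := by
        refine Pn_mono fun σ small => ?_
        by_contra! far
        exact small.not_ge (pow_le_abs_flipGain_spearmanCost hq
          (mem_Icc_rev_of_notMem_margin hp far.1) (mem_Icc_rev_of_notMem_margin hp far.2.1)
          w.cast_nonneg (not_lt.1 far.2.2))
    _ ≤ 2 * m / n + (2 * m / n + 4 * w / n) :=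
        (Pn_or_le _ _).trans (add_le_add (Pn_margin_le p)
          ((Pn_or_le _ _).trans (add_le_add (Pn_margin_le p.rev) Pn_near_le)))
    _ = (4 * m + 4 * w) / n := by ring

/-- The positions `p < 2 * M` at which the flip `p ↔ Fin.rev p` changes `ρ_q` by at least
`w ^ q`. -/
noncomputable def effectiveFlips (q M w : ℕ) (σ : Equiv.Perm (Fin n)) : Finset (Fin n) :=
  {p ∈ lowerMargin n (2 * M) | (w : ℝ) ^ q ≤ |flipGain (spearmanCost q) σ p|}

lemma Pn_card_effectiveFlips_lt_le {q : ℕ} (hq : q ≠ 0) {M : ℕ} (hM : 4 * M ≤ n) (w : ℕ) :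
    Pn (fun σ : Equiv.Perm (Fin n) => #(effectiveFlips q M w σ) < M) ≤ (16 * M + 8 * w) / n := by
  obtain rfl | M_pos := M.eq_zero_or_pos
  · simp only [not_lt_zero, Pn_false]
    positivity
  have card_flips : #(lowerMargin n (2 * M)) = 2 * M := card_lowerMargin (by omega)
  have many_small (σ : Equiv.Perm (Fin n)) (few : #(effectiveFlips q M w σ) < M) :
      M ≤ #{p ∈ lowerMargin n (2 * M) | |flipGain (spearmanCost q) σ p| < (w : ℝ) ^ q} := by
    have partition := card_filter_add_card_filter_not (s := lowerMargin n (2 * M))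
      fun p => (w : ℝ) ^ q ≤ |flipGain (spearmanCost q) σ p|
    simp only [not_le] at partition
    rw [card_flips] at partition
    rw [effectiveFlips] at few
    omega
  refine le_of_mul_le_mul_left ?_ (Nat.cast_pos.2 M_pos : (0 : ℝ) < M)
  calc M * Pn (fun σ : Equiv.Perm (Fin n) => #(effectiveFlips q M w σ) < M)
      ≤ ∑ p ∈ lowerMargin n (2 * M), Pn (fun σ : Equiv.Perm (Fin n) =>
          |flipGain (spearmanCost q) σ p| < (w : ℝ) ^ q) := by
        refine le_trans ?_ (mul_Pn_le_card_filter_le_sum _ _ M)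
        gcongr
        exact Pn_mono fun σ few => by convert many_small σ few
    _ ≤ ∑ _p ∈ lowerMargin n (2 * M), (4 * (2 * M : ℕ) + 4 * (w : ℝ)) / n :=
        sum_le_sum fun p hp => Pn_abs_flipGain_lt_le hq (by omega) hp w
    _ = M * ((16 * M + 8 * w) / n) := by
        rw [sum_const, card_flips, nsmul_eq_mul]; push_cast; ring

lemma card_pairFlip_rhoq_mem_Ico_le {q M w : ℕ} (hM : 4 * M ≤ n) {σ : Equiv.Perm (Fin n)}
    (many : M ≤ #(effectiveFlips q M w σ)) (t : ℝ) (J : ℕ) :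
    #{S ∈ (lowerMargin n (2 * M)).powerset |
        rhoq q (σ * pairFlip S) ∈ Set.Ico t (t + J • (w : ℝ) ^ q)} ≤
      J * (M.choose (M / 2) * 2 ^ M) := by
  obtain ⟨G, G_sub, card_G⟩ := exists_subset_card_eq many
  have G_sub_margin : G ⊆ lowerMargin n (2 * M) := G_sub.trans (filter_subset _ _)
  have gain_large : ∀ p ∈ G, (w : ℝ) ^ q ≤ |flipGain (spearmanCost q) σ p| :=
    fun p hp => (mem_filter.1 (G_sub hp)).2
  have bound := card_powerset_sum_mem_Ico_nsmul_le G_sub_margin gain_large (t - rhoq q σ) J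
  rw [card_G, card_lowerMargin (by omega), (by omega : 2 * M - M = M)] at bound
  refine (card_le_card fun S hS => ?_).trans bound
  obtain ⟨S_mem, window⟩ := mem_filter.1 hS
  have rhoq_flip : rhoq q (σ * pairFlip S) =
      rhoq q σ + ∑ p ∈ S, flipGain (spearmanCost q) σ p :=
    sum_comp_pairFlip (spearmanCost q) σ fun i =>
      rev_notMem_of_subset_lowerMargin (by omega) (mem_powerset.1 S_mem)
  rw [rhoq_flip] at window
  exact mem_filter.2 ⟨S_mem, by linarith [window.1], by linarith [window.2]⟩

lemma Pn_rhoq_mem_Ico_le {q : ℕ} (hq : q ≠ 0) {M : ℕ} (hM : 4 * M ≤ n) (w J : ℕ) (t : ℝ) :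
    Pn (fun σ : Equiv.Perm (Fin n) => rhoq q σ ∈ Set.Ico t (t + J • (w : ℝ) ^ q)) ≤
      (16 * M + 8 * w) / n + J * (M.choose (M / 2) / 2 ^ M) := by
  have averaged := card_mul_Pn_le_of_card_translates_le (lowerMargin n (2 * M)).powerset pairFlip
    (fun σ => rhoq q σ ∈ Set.Ico t (t + J • (w : ℝ) ^ q))
    (fun σ => #(effectiveFlips q M w σ) < M) (J * (M.choose (M / 2) * 2 ^ M))
    fun σ many => by convert card_pairFlip_rhoq_mem_Ico_le hM (not_lt.1 many) t J
  have few := Pn_card_effectiveFlips_lt_le hq hM w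
  rw [card_powerset, card_lowerMargin (by omega)] at averaged
  push_cast at averaged
  have pow_pos : (0 : ℝ) < 2 ^ (2 * M) := by positivity
  refine le_of_mul_le_mul_left (averaged.trans ?_) pow_pos
  rw [mul_add]
  refine add_le_add (mul_le_mul_of_nonneg_left few pow_pos.le) (le_of_eq ?_)
  rw [two_mul, pow_add]
  field_simp

lemma Pn_abs_rhoq_sub_le_le {q : ℕ} (hq : q ≠ 0) {C : ℝ} (hC : 0 ≤ C) {L M : ℕ} (hL : 0 < L)
    (hLn : L ≤ n) (hM : 4 * M ≤ n) (t : ℝ) :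
    Pn (fun σ : Equiv.Perm (Fin n) => |rhoq q σ - t| ≤ C * (n : ℝ) ^ q) ≤
      16 * M / n + 8 / L + (⌊2 * C * (2 * L) ^ q⌋₊ + 1 : ℕ) * (M.choose (M / 2) / 2 ^ M) := by
  set w := n / L
  set J := ⌊2 * C * (2 * (L : ℝ)) ^ q⌋₊ + 1
  have w_pos : 0 < w := Nat.div_pos hLn hL
  have n_pos : (0 : ℝ) < n := mod_cast hL.trans_le hLn
  have n_le : (n : ℝ) ≤ 2 * L * w := by
    have : n < L * (w + 1) := Nat.lt_mul_div_succ n hL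
    exact_mod_cast (by nlinarith : n ≤ 2 * L * w)
  have window_lt : 2 * (C * (n : ℝ) ^ q) < J * (w : ℝ) ^ q :=
    calc 2 * (C * (n : ℝ) ^ q) ≤ 2 * (C * (2 * L * w) ^ q) := by gcongr
      _ = 2 * C * (2 * L) ^ q * (w : ℝ) ^ q := by rw [mul_pow]; ring
      _ < J * (w : ℝ) ^ q := by
          gcongr
          exact Nat.lt_of_floor_lt (Nat.lt_succ_self _)
  have w_div_le : 8 * (w : ℝ) / n ≤ 8 / L := by
    rw [div_le_div_iff₀ n_pos (mod_cast hL), mul_assoc]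
    gcongr
    exact_mod_cast Nat.div_mul_le_self n L
  calc Pn (fun σ : Equiv.Perm (Fin n) => |rhoq q σ - t| ≤ C * (n : ℝ) ^ q)
      ≤ Pn (fun σ : Equiv.Perm (Fin n) => rhoq q σ ∈
          Set.Ico (t - C * (n : ℝ) ^ q) (t - C * (n : ℝ) ^ q + J • (w : ℝ) ^ q)) := by
        refine Pn_mono fun σ near => ?_
        rw [abs_le] at near
        rw [nsmul_eq_mul]
        constructor <;> linarith
    _ ≤ (16 * M + 8 * w) / n + J * (M.choose (M / 2) / 2 ^ M) := Pn_rhoq_mem_Ico_le hq hM ..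
    _ ≤ 16 * M / n + 8 / L + J * (M.choose (M / 2) / 2 ^ M) := by
        rw [add_div]
        gcongr

lemma tendsto_Pn_abs_rhoq_sub_le {q : ℕ} (hq : q ≠ 0) {C : ℝ} (hC : 0 ≤ C) (t : ℕ → ℝ) :
    Tendsto (fun n : ℕ => Pn (fun σ : Equiv.Perm (Fin n) => |rhoq q σ - t n| ≤ C * (n : ℝ) ^ q))
      atTop (nhds 0) := by
  refine tendsto_order.2 ⟨fun a ha => .of_forall fun n => ha.trans_le (Pn_nonneg _), fun ε hε => ?_⟩
  obtain ⟨L, L_pos, L_large⟩ : ∃ L : ℕ, 0 < L ∧ 8 / (L : ℝ) < ε / 3 :=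
    ((eventually_gt_atTop 0).and
      ((tendsto_const_div_atTop_nhds_zero_nat 8).eventually_lt_const (by positivity))).exists
  obtain ⟨m, m_large⟩ : ∃ m : ℕ, ((⌊2 * C * (2 * L) ^ q⌋₊ + 1 : ℕ) : ℝ) *
      ((2 * m).choose (2 * m / 2) / 2 ^ (2 * m)) < ε / 3 := by
    have lim := tendsto_centralBinom_div_four_pow.const_mul
      ((⌊2 * C * (2 * L) ^ q⌋₊ + 1 : ℕ) : ℝ)
    rw [mul_zero] at lim
    obtain ⟨m, hm⟩ := (lim.eventually_lt_const (by positivity : 0 < ε / 3)).exists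
    refine ⟨m, ?_⟩
    rwa [Nat.mul_div_cancel_left m two_pos, ← Nat.centralBinom_eq_two_mul_choose, pow_mul,
      (by norm_num : (2 : ℝ) ^ 2 = 4)]
  filter_upwards [eventually_ge_atTop L, eventually_ge_atTop (4 * (2 * m)),
    (tendsto_const_div_atTop_nhds_zero_nat (16 * (2 * m : ℕ) : ℝ)).eventually_lt_const
      (by positivity : 0 < ε / 3)] with n L_le m_le n_large
  have := Pn_abs_rhoq_sub_le_le hq hC L_pos L_le m_le (t n)
  linarith

end Anticoncentration

section SwitchSensitivity

variable {n : ℕ}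

lemma exists_rhoqBar_le_iff_rhoq_le (q n : ℕ) (y : ℝ) :
    ∃ T : ℝ, ∀ σ : Equiv.Perm (Fin n), rhoqBar q σ ≤ y ↔ rhoq q σ ≤ T := by
  unfold rhoqBar
  obtain sqrt_eq | sqrt_pos := (Real.sqrt_nonneg (VarN (rhoq q (n := n)))).eq_or_lt
  · -- The variance vanishes, so `rhoqBar` is the junk value `0`.
    simp only [← sqrt_eq, div_zero]
    by_cases hy : 0 ≤ y
    · obtain ⟨T, hT⟩ := Finite.bddAbove_range (rhoq q (n := n))
      exact ⟨T, fun σ => iff_of_true hy (hT ⟨σ, rfl⟩)⟩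
    · have rhoq_nonneg (σ : Equiv.Perm (Fin n)) : 0 ≤ rhoq q σ := by unfold rhoq; positivity
      exact ⟨-1, fun σ => iff_of_false hy (by linarith [rhoq_nonneg σ])⟩
  · refine ⟨y * √(VarN (rhoq q (n := n))) + En (rhoq q (n := n)), fun σ => ?_⟩
    rw [div_le_iff₀ sqrt_pos, sub_le_iff_le_add]

lemma exists_abs_rhoq_sub_le_of_switchSensitive {s : Finset ℕ} {T : ℕ → ℝ}
    {σ : Equiv.Perm (Fin n)} (h : SwitchSensitive (fun τ => ∀ q ∈ s, rhoq q τ ≤ T q) σ) :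
    ∃ q ∈ s, |rhoq q σ - T q| ≤ 2 * (n : ℝ) ^ q := by
  by_contra! far
  obtain ⟨i, j, changes⟩ := h
  refine changes (forall₂_congr fun q hq => ?_)
  have moved := abs_le.1 (abs_rhoq_switch_sub_rhoq_le q i j σ)
  have : (0 : ℝ) ≤ (n : ℝ) ^ q := by positivity
  obtain above | below := lt_abs.1 (far q hq)
  · exact iff_of_false (by linarith) (by linarith [moved.1])
  · exact iff_of_true (by linarith) (by linarith [moved.2])

lemma tendsto_Pn_switchSensitive_rhoqBar_le {s : Finset ℕ} (hs : ∀ q ∈ s, q ≠ 0) (y : ℕ → ℝ) :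
    Tendsto (fun n : ℕ => Pn (SwitchSensitive fun σ : Equiv.Perm (Fin n) =>
      ∀ q ∈ s, rhoqBar q σ ≤ y q)) atTop (nhds 0) := by
  choose T hT using fun n q : ℕ => exists_rhoqBar_le_iff_rhoq_le q n (y q)
  simp only [hT]
  refine squeeze_zero (fun n => Pn_nonneg _) (fun n =>
    (Pn_mono fun σ => exists_abs_rhoq_sub_le_of_switchSensitive).trans (Pn_exists_mem_le s _)) ?_
  simpa using tendsto_finsetSum s fun q hq =>
    tendsto_Pn_abs_rhoq_sub_le (hs q hq) zero_le_two fun n => T n q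

end SwitchSensitivity

section CornerBoard

/-- The two corners of the `n × n` board formed by the cells `(i, j)` at distance
`|j − i| ≥ n − x √n` from the diagonal. -/
noncomputable def cornerBoard (x : ℝ) (n : ℕ) : Finset (Fin n × Fin n) :=
  {c | (n : ℝ) - x * √n ≤ |((c.2 : ℕ) : ℝ) - ((c.1 : ℕ) : ℝ)|}

variable {n : ℕ}

lemma le_rhoInf_iff [NeZero n] (a : ℝ) (σ : Equiv.Perm (Fin n)) :
    a ≤ rhoInf σ ↔ ∃ i, a ≤ |((σ i : ℕ) : ℝ) - ((i : ℕ) : ℝ)| := by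
  let dist (i : Fin n) : ℕ := (((σ i : ℕ) : ℤ) - ((i : ℕ) : ℤ)).natAbs
  have cast_dist (i : Fin n) : (dist i : ℝ) = |((σ i : ℕ) : ℝ) - ((i : ℕ) : ℝ)| := by
    simp only [dist, Nat.cast_natAbs]; push_cast; rfl
  simp only [← cast_dist]
  refine ⟨fun h => ?_, fun ⟨i, hi⟩ => hi.trans (mod_cast le_sup (f := dist) (mem_univ i))⟩
  obtain ⟨i, -, hi⟩ := exists_mem_eq_sup univ univ_nonempty dist
  exact ⟨i, h.trans_eq (congrArg Nat.cast hi)⟩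

lemma sub_rhoInf_div_sqrt_le_iff [NeZero n] (x : ℝ) (σ : Equiv.Perm (Fin n)) :
    ((n : ℝ) - (rhoInf σ : ℝ)) / √n ≤ x ↔ ¬ AvoidsBoard (cornerBoard x n) σ := by
  have sqrt_pos : 0 < √(n : ℝ) := Real.sqrt_pos.2 (mod_cast NeZero.pos n)
  rw [div_le_iff₀ sqrt_pos, sub_le_comm, le_rhoInf_iff]
  simp [AvoidsBoard, cornerBoard]

lemma cornerBoard_subset_margin_product (x : ℝ) (n : ℕ) :
    cornerBoard x n ⊆ margin n ⌈|x| * √n⌉₊ ×ˢ margin n ⌈|x| * √n⌉₊ := by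
  rintro ⟨i, j⟩ hij
  have far : (n : ℝ) - x * √n ≤ |((j : ℕ) : ℝ) - ((i : ℕ) : ℝ)| := by
    simpa [cornerBoard] using hij
  have le_ceil : x * √n ≤ ⌈|x| * √n⌉₊ :=
    (mul_le_mul_of_nonneg_right (le_abs_self x) (Real.sqrt_nonneg _)).trans (Nat.le_ceil _)
  generalize ⌈|x| * √n⌉₊ = m at le_ceil ⊢
  simp only [mem_product, mem_margin, Fin.val_rev]
  have hi := i.is_lt
  have hj := j.is_lt
  obtain above | below := le_abs.1 (far.trans' (sub_le_sub_left le_ceil _))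
  · have : n + i ≤ j + m := by exact_mod_cast (by linarith : (n : ℝ) + i ≤ j + m)
    constructor <;> omega
  · have : n + j ≤ i + m := by exact_mod_cast (by linarith : (n : ℝ) + j ≤ i + m)
    constructor <;> omega

lemma card_margin_ceil_le [NeZero n] (x : ℝ) :
    (#(margin n ⌈|x| * √n⌉₊) : ℝ) ≤ 2 * (|x| + 1) * √n := by
  have one_le_sqrt : 1 ≤ √(n : ℝ) := Real.one_le_sqrt.2 (mod_cast NeZero.one_le)
  calc (#(margin n ⌈|x| * √n⌉₊) : ℝ) ≤ 2 * ⌈|x| * √n⌉₊ := mod_cast card_margin_le n _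
    _ ≤ 2 * (|x| * √n + √n) := by
        gcongr
        exact (Nat.ceil_lt_add_one (by positivity)).le.trans (by gcongr)
    _ = 2 * (|x| + 1) * √n := by ring

end CornerBoard

section AsymptoticIndependence

lemma abs_Pn_rhoInf_and_sub_mul_le {n : ℕ} [NeZero n] (x : ℝ) (B : Equiv.Perm (Fin n) → Prop) :
    |Pn (fun σ => ((n : ℝ) - (rhoInf σ : ℝ)) / √n ≤ x ∧ B σ) -
        Pn (fun σ : Equiv.Perm (Fin n) => ((n : ℝ) - (rhoInf σ : ℝ)) / √n ≤ x) * Pn B| ≤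
      2 * ((2 * (|x| + 1)) ^ 2 * (2 * (2 * (|x| + 1)) / √n + Pn (SwitchSensitive B))) := by
  have n_pos : (0 : ℝ) < n := mod_cast NeZero.pos n
  have card_le := card_margin_ceil_le (n := n) x
  have sensitive_nonneg := Pn_nonneg (SwitchSensitive B)
  simp only [sub_rhoInf_div_sqrt_le_iff]
  rw [Pn_not_and_sub_mul, abs_neg]
  refine (abs_Pn_avoidsBoard_and_sub_mul_le (cornerBoard_subset_margin_product x n) B).trans ?_
  set r := (#(margin n ⌈|x| * √n⌉₊) : ℝ)
  set c : ℝ := 2 * (|x| + 1)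
  have cells_le : r ^ 2 / n ≤ c ^ 2 := by
    rw [div_le_iff₀ n_pos]
    calc r ^ 2 ≤ (c * √n) ^ 2 := by gcongr
      _ = c ^ 2 * n := by rw [mul_pow, Real.sq_sqrt n_pos.le]
  have lines_le : 2 * r / n ≤ 2 * c / √n :=
    calc 2 * r / n ≤ 2 * (c * √n) / n := by gcongr
      _ = 2 * c / √n := by rw [← mul_assoc, mul_div_assoc, Real.sqrt_div_self', mul_one_div]
  gcongr

lemma tendsto_Pn_rhoInf_and_sub_mul (x : ℝ) {B : ∀ n : ℕ, Equiv.Perm (Fin n) → Prop}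
    (hB : Tendsto (fun n => Pn (SwitchSensitive (B n))) atTop (nhds 0)) :
    Tendsto (fun n : ℕ =>
        Pn (fun σ : Equiv.Perm (Fin n) => ((n : ℝ) - (rhoInf σ : ℝ)) / √n ≤ x ∧ B n σ) -
          Pn (fun σ : Equiv.Perm (Fin n) => ((n : ℝ) - (rhoInf σ : ℝ)) / √n ≤ x) * Pn (B n))
      atTop (nhds 0) := by
  have inv_sqrt : Tendsto (fun n : ℕ => 2 * (2 * (|x| + 1)) / √(n : ℝ)) atTop (nhds 0) :=
    tendsto_const_nhds.div_atTop (Real.tendsto_sqrt_atTop.comp tendsto_natCast_atTop_atTop)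
  have bound := ((inv_sqrt.add hB).const_mul ((2 * (|x| + 1)) ^ 2)).const_mul 2
  simp only [add_zero, mul_zero] at bound
  refine squeeze_zero_norm' ?_ bound
  filter_upwards [eventually_ne_atTop 0] with n n_ne_zero
  have : NeZero n := ⟨n_ne_zero⟩
  exact abs_Pn_rhoInf_and_sub_mul_le x (B n)

end AsymptoticIndependence

/-- `(n − ρ_∞)/√n` is asymptotically weakly independent of the random vector
`(ρ̄_1, …, ρ̄_k)`. -/
theorem rhoInf_asymp_indep_rhoqBar_vector (k : ℕ) (x : ℝ) (y : ℕ → ℝ) :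
    Tendsto (fun n : ℕ =>
        Pn (fun σ : Equiv.Perm (Fin n) =>
            ((n : ℝ) - (rhoInf σ : ℝ)) / Real.sqrt n ≤ x ∧
              ∀ q ∈ Finset.Icc 1 k, rhoqBar q σ ≤ y q) -
          Pn (fun σ : Equiv.Perm (Fin n) =>
              ((n : ℝ) - (rhoInf σ : ℝ)) / Real.sqrt n ≤ x) *
            Pn (fun σ : Equiv.Perm (Fin n) =>
              ∀ q ∈ Finset.Icc 1 k, rhoqBar q σ ≤ y q))
      atTop (nhds 0) := by
  refine tendsto_Pn_rhoInf_and_sub_mul x (tendsto_Pn_switchSensitive_rhoqBar_le ?_ y)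
  exact fun q hq => Nat.one_le_iff_ne_zero.1 (mem_Icc.1 hq).1
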